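/- For α ∈ (0,π/2] let B(α) := (cos(α/2), sin(α/2), 0) (the unit magnetic field tangent to a face of the wedge W_α and normal to its edge, i.e. with spherical coordinates (π/2, (π−α)/2)). Then the map α ↦ λ(B(α);W_α) is non-decreasing on (0,π/2]. -/

import Mathlib

open Real MeasureTheory Set Filter

noncomputable section

namespace MagWedge

/-- The infinite sector `S_α := {(x₁,x₂) : |x₂| ≤ x₁·tan(α/2)}`. -/
def sector (α : ℝ) : Set (ℝ × ℝ) :=
  {x | |x.2| ≤ x.1 * Real.tan (α / 2)}

/-- The infinite wedge `W_α := S_α × ℝ` (coordinates `(x₁, x₂, x₃)`). -/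
def wedge (α : ℝ) : Set (ℝ × ℝ × ℝ) :=
  {x | |x.2.1| ≤ x.1 * Real.tan (α / 2)}

/-- The upper half-plane `Hp^up := {x₂ < x₁·tan(α/2)}`. -/
def hpUp (α : ℝ) : Set (ℝ × ℝ) :=
  {x | x.2 < x.1 * Real.tan (α / 2)}

/-- The lower half-plane `Hp^low := {x₂ > −x₁·tan(α/2)}`. -/
def hpLow (α : ℝ) : Set (ℝ × ℝ) :=
  {x | -(x.1 * Real.tan (α / 2)) < x.2}

/-- The magnetic/electric energy of `u` on a planar domain `Ω`, for magnetic field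
`(b₁,b₂,b₃)` (gauge `A̲ = (−x₂ b₃, 0)`) and Fourier parameter `τ`. -/
def energy2D (Ω : Set (ℝ × ℝ)) (b1 b2 b3 τ : ℝ) (u : ℝ × ℝ → ℂ) : ℝ :=
  ∫ x in Ω,
    ‖(-Complex.I) * fderiv ℝ u x (1, 0) + ((x.2 * b3 : ℝ) : ℂ) * u x‖ ^ 2
      + ‖fderiv ℝ u x (0, 1)‖ ^ 2
      + (x.1 * b2 - x.2 * b1 - τ) ^ 2 * ‖u x‖ ^ 2

/-- The squared `L²`-norm of `u` on a planar domain `Ω`. -/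
def norm2D (Ω : Set (ℝ × ℝ)) (u : ℝ × ℝ → ℂ) : ℝ := ∫ x in Ω, ‖u x‖ ^ 2

/-- The bottom of the spectrum of the Neumann realization of
`(−i∇−A̲)² + (x₁b₂−x₂b₁−τ)²` on `Ω`, via the Rayleigh quotient. -/
def specInf2D (Ω : Set (ℝ × ℝ)) (b1 b2 b3 τ : ℝ) : ℝ :=
  sInf { r : ℝ | ∃ u : ℝ × ℝ → ℂ, ContDiff ℝ (⊤ : ℕ∞) u ∧ HasCompactSupport u ∧
    0 < norm2D Ω u ∧ r = energy2D Ω b1 b2 b3 τ u / norm2D Ω u }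

/-- The band function `s(B;α,τ)` on the sector `S_α`. -/
def bandFn (α b1 b2 b3 τ : ℝ) : ℝ := specInf2D (sector α) b1 b2 b3 τ

/-- `Σ(B;α,τ,R)` : the Rayleigh quotient infimum over functions supported outside the
(closed Euclidean) ball of radius `R` centered at the origin. -/
def SigmaR (α b1 b2 b3 τ R : ℝ) : ℝ :=
  sInf { r : ℝ | ∃ u : ℝ × ℝ → ℂ, ContDiff ℝ (⊤ : ℕ∞) u ∧ HasCompactSupport u ∧
    (tsupport u ⊆ {x : ℝ × ℝ | R ^ 2 < x.1 ^ 2 + x.2 ^ 2}) ∧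
    0 < norm2D (sector α) u ∧
    r = energy2D (sector α) b1 b2 b3 τ u / norm2D (sector α) u }

/-- The bottom of the essential spectrum via Persson's characterization:
`s_ess(B;α,τ) = sup_{R>0} Σ(B;α,τ,R)`. -/
def sEss (α b1 b2 b3 τ : ℝ) : ℝ :=
  sSup { r : ℝ | ∃ R > (0 : ℝ), r = SigmaR α b1 b2 b3 τ R }

/-- The 3D magnetic energy on a domain `Ω ⊆ ℝ³` for the constant field `(b₁,b₂,b₃)`,
in the gauge `A = (−x₂b₃, 0, x₂b₁ − x₁b₂)`. -/
def energy3D (Ω : Set (ℝ × ℝ × ℝ)) (b1 b2 b3 : ℝ) (u : ℝ × ℝ × ℝ → ℂ) : ℝ :=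
  ∫ x in Ω,
    ‖(-Complex.I) * fderiv ℝ u x (1, 0, 0) + ((x.2.1 * b3 : ℝ) : ℂ) * u x‖ ^ 2
      + ‖fderiv ℝ u x (0, 1, 0)‖ ^ 2
      + ‖(-Complex.I) * fderiv ℝ u x (0, 0, 1) - ((x.2.1 * b1 : ℝ) : ℂ) * u x
          + ((x.1 * b2 : ℝ) : ℂ) * u x‖ ^ 2

/-- The squared `L²`-norm of `u` on a domain `Ω ⊆ ℝ³`. -/
def norm3D (Ω : Set (ℝ × ℝ × ℝ)) (u : ℝ × ℝ × ℝ → ℂ) : ℝ := ∫ x in Ω, ‖u x‖ ^ 2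

/-- `λ(B;W_α)` : the bottom of the spectrum of the Neumann magnetic Laplacian on the
wedge `W_α` with constant magnetic field `B = (b₁,b₂,b₃)`. -/
def lambdaWedge (α b1 b2 b3 : ℝ) : ℝ :=
  sInf { r : ℝ | ∃ u : ℝ × ℝ × ℝ → ℂ, ContDiff ℝ (⊤ : ℕ∞) u ∧ HasCompactSupport u ∧
    0 < norm3D (wedge α) u ∧ r = energy3D (wedge α) b1 b2 b3 u / norm3D (wedge α) u }

/-- The de Gennes function `μ₁(ξ)`: bottom of the spectrum of the Neumann realization of
`−d²/dt² + (t−ξ)²` on the half-line. -/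
def deGennes (ξ : ℝ) : ℝ :=
  sInf { r : ℝ | ∃ u : ℝ → ℂ, ContDiff ℝ (⊤ : ℕ∞) u ∧ HasCompactSupport u ∧
    (0 < ∫ t in Ioi (0 : ℝ), ‖u t‖ ^ 2) ∧
    r = (∫ t in Ioi (0 : ℝ), ‖deriv u t‖ ^ 2 + (t - ξ) ^ 2 * ‖u t‖ ^ 2) /
        (∫ t in Ioi (0 : ℝ), ‖u t‖ ^ 2) }

/-- `Θ₀ := inf_ξ μ₁(ξ)`. -/
def Theta0 : ℝ := ⨅ ξ : ℝ, deGennes ξ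

/-- The half-space `{(s,t,z) : t > 0}` in ℝ³. -/
def halfSpace3 : Set (ℝ × ℝ × ℝ) := {x | 0 < x.2.1}

/-- `σ(θ)` : the bottom of the spectrum of the Neumann magnetic Laplacian on the half-space
with a unit magnetic field making angle `θ` with the boundary. -/
def sigmaHS (θ : ℝ) : ℝ :=
  sInf { r : ℝ | ∃ u : ℝ × ℝ × ℝ → ℂ, ContDiff ℝ (⊤ : ℕ∞) u ∧ HasCompactSupport u ∧
    (0 < ∫ x in halfSpace3, ‖u x‖ ^ 2) ∧
    r = (∫ x in halfSpace3,
          ‖fderiv ℝ u x (1, 0, 0)‖ ^ 2 + ‖fderiv ℝ u x (0, 1, 0)‖ ^ 2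
            + ‖(-Complex.I) * fderiv ℝ u x (0, 0, 1)
                - ((x.2.1 * Real.cos θ : ℝ) : ℂ) * u x
                + ((x.1 * Real.sin θ : ℝ) : ℂ) * u x‖ ^ 2) /
        (∫ x in halfSpace3, ‖u x‖ ^ 2) }

/-- `μ(α)` : the bottom of the spectrum of the magnetic Neumann Laplacian on the sector
`S_α` with unit constant (scalar) magnetic field. -/
def muSector (α : ℝ) : ℝ :=
  sInf { r : ℝ | ∃ u : ℝ × ℝ → ℂ, ContDiff ℝ (⊤ : ℕ∞) u ∧ HasCompactSupport u ∧
    0 < norm2D (sector α) u ∧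
    r = (∫ x in sector α,
          ‖(-Complex.I) * fderiv ℝ u x (1, 0) + (x.2 : ℂ) * u x‖ ^ 2
            + ‖fderiv ℝ u x (0, 1)‖ ^ 2) / norm2D (sector α) u }

end MagWedge

/-!
Rotate the wedge about its edge so that the face containing `B` lies in `x₂ = 0`: the field becomes
a multiple `b e₁` and the wedge becomes `{x₂ ≤ 0, 0 ≤ x₁ + κ x₂}` with `κ = cot α`. For such a
field the energy density is `|∂₁u|² + |∂₂u|² + |(-i∂₃ - b x₂)u|²`, and composing `u` with the
stretch `x₁ ↦ c x₁` only multiplies its first term by `c²`. Since this stretch carries the wedge of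
parameter `κ` to the one of parameter `c κ`, taking `c ≤ 1` shows that lowering a positive `κ`, that
is, opening the wedge, cannot lower the spectrum. The value `κ = 0`, which no stretch reaches,
follows by continuity in `κ` of the integrals of a fixed function.
-/

namespace MagWedge

section ChangeOfVariables

instance isAddHaarMeasure_volume_prod {E F : Type*}
    [AddGroup E] [TopologicalSpace E] [MeasureSpace E] [BorelSpace E] [SecondCountableTopology E]
    [IsTopologicalAddGroup E] [AddGroup F] [TopologicalSpace F] [MeasureSpace F] [BorelSpace F]
    [SecondCountableTopology F] [IsTopologicalAddGroup F]
    [(volume : Measure E).IsAddHaarMeasure] [(volume : Measure F).IsAddHaarMeasure]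
    [SFinite (volume : Measure E)] [SFinite (volume : Measure F)] :
    (volume : Measure (E × F)).IsAddHaarMeasure :=
  Measure.prod.instIsAddHaarMeasure _ _

variable {E : Type*} [NormedAddCommGroup E] [NormedSpace ℝ E]

lemma abs_det_inv_pos (L : E ≃L[ℝ] E) : 0 < |(L : E →L[ℝ] E).det|⁻¹ :=
  inv_pos.2 (abs_pos.2 L.toLinearEquiv.isUnit_det'.ne_zero)

lemma setIntegral_preimage_comp_continuousLinearEquiv [FiniteDimensional ℝ E] [MeasurableSpace E]
    [BorelSpace E] {F : Type*} [NormedAddCommGroup F] [NormedSpace ℝ F] (μ : Measure E)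
    [μ.IsAddHaarMeasure] (L : E ≃L[ℝ] E) (s : Set E) (f : E → F) :
    ∫ x in L ⁻¹' s, f (L x) ∂μ = |(L : E →L[ℝ] E).det|⁻¹ • ∫ y in s, f y ∂μ := by
  have map_eq : μ.map L = ENNReal.ofReal |(L : E →L[ℝ] E).det⁻¹| • μ :=
    Measure.map_linearMap_addHaar_eq_smul_addHaar μ L.toLinearEquiv.isUnit_det'.ne_zero
  have embedding : MeasurableEmbedding L := L.toHomeomorph.measurableEmbedding
  rw [← embedding.setIntegral_map f s, map_eq, Measure.restrict_smul, integral_smul_measure,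
    ENNReal.toReal_ofReal (abs_nonneg _), abs_inv]

end ChangeOfVariables

section Energy

variable {Ω : Set (ℝ × ℝ × ℝ)} {b1 b2 b3 : ℝ} {u : ℝ × ℝ × ℝ → ℂ}

/-- The integrand of `energy3D`. -/
def energyDensity (b1 b2 b3 : ℝ) (u : ℝ × ℝ × ℝ → ℂ) (x : ℝ × ℝ × ℝ) : ℝ :=
  ‖(-Complex.I) * fderiv ℝ u x (1, 0, 0) + ((x.2.1 * b3 : ℝ) : ℂ) * u x‖ ^ 2
    + ‖fderiv ℝ u x (0, 1, 0)‖ ^ 2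
    + ‖(-Complex.I) * fderiv ℝ u x (0, 0, 1) - ((x.2.1 * b1 : ℝ) : ℂ) * u x
        + ((x.1 * b2 : ℝ) : ℂ) * u x‖ ^ 2

lemma energy3D_eq_setIntegral_energyDensity (Ω : Set (ℝ × ℝ × ℝ)) (b1 b2 b3 : ℝ)
    (u : ℝ × ℝ × ℝ → ℂ) : energy3D Ω b1 b2 b3 u = ∫ x in Ω, energyDensity b1 b2 b3 u x := rfl

lemma energyDensity_nonneg (b1 b2 b3 : ℝ) (u : ℝ × ℝ × ℝ → ℂ) (x : ℝ × ℝ × ℝ) :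
    0 ≤ energyDensity b1 b2 b3 u x := by
  unfold energyDensity
  positivity

lemma energy3D_nonneg (Ω : Set (ℝ × ℝ × ℝ)) (b1 b2 b3 : ℝ) (u : ℝ × ℝ × ℝ → ℂ) :
    0 ≤ energy3D Ω b1 b2 b3 u :=
  integral_nonneg (energyDensity_nonneg b1 b2 b3 u)

lemma norm3D_nonneg (Ω : Set (ℝ × ℝ × ℝ)) (u : ℝ × ℝ × ℝ → ℂ) : 0 ≤ norm3D Ω u :=
  integral_nonneg fun _ => sq_nonneg _

lemma continuous_energyDensity (hu : ContDiff ℝ 1 u) : Continuous (energyDensity b1 b2 b3 u) := by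
  have cont_u := hu.continuous
  have cont_deriv (v : ℝ × ℝ × ℝ) : Continuous fun x => fderiv ℝ u x v :=
    (hu.continuous_fderiv one_ne_zero).clm_apply continuous_const
  have := cont_deriv (1, 0, 0)
  have := cont_deriv (0, 1, 0)
  have := cont_deriv (0, 0, 1)
  unfold energyDensity
  fun_prop

lemma support_energyDensity_subset : Function.support (energyDensity b1 b2 b3 u) ⊆ tsupport u := by
  refine Function.support_subset_iff'.2 fun x hx => ?_
  have hu : u x = 0 := image_eq_zero_of_notMem_tsupport hx
  have hu' : fderiv ℝ u x = 0 :=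
    image_eq_zero_of_notMem_tsupport fun h => hx (tsupport_fderiv_subset ℝ h)
  simp [energyDensity, hu, hu']

lemma integrable_energyDensity (hu : ContDiff ℝ 1 u) (hsupp : HasCompactSupport u) :
    Integrable (energyDensity b1 b2 b3 u) :=
  (continuous_energyDensity hu).integrable_of_hasCompactSupport
    (hsupp.mono' support_energyDensity_subset)

lemma norm3D_preimage_comp (L : (ℝ × ℝ × ℝ) ≃L[ℝ] ℝ × ℝ × ℝ) (Ω : Set (ℝ × ℝ × ℝ))
    (u : ℝ × ℝ × ℝ → ℂ) :
    norm3D (L ⁻¹' Ω) (u ∘ L) = |(L : (ℝ × ℝ × ℝ) →L[ℝ] ℝ × ℝ × ℝ).det|⁻¹ * norm3D Ω u :=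
  setIntegral_preimage_comp_continuousLinearEquiv volume L Ω fun y => ‖u y‖ ^ 2

end Energy

section Spectrum

variable {Ω : Set (ℝ × ℝ × ℝ)} {b1 b2 b3 : ℝ} {u : ℝ × ℝ × ℝ → ℂ}

/-- The bottom of the spectrum of the Neumann magnetic Laplacian with constant field
`(b₁,b₂,b₃)` on an arbitrary domain `Ω ⊆ ℝ³`, of which `lambdaWedge` is the case `Ω = wedge α`. -/
def specInf3D (Ω : Set (ℝ × ℝ × ℝ)) (b1 b2 b3 : ℝ) : ℝ :=
  sInf { r : ℝ | ∃ u : ℝ × ℝ × ℝ → ℂ, ContDiff ℝ (⊤ : ℕ∞) u ∧ HasCompactSupport u ∧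
    0 < norm3D Ω u ∧ r = energy3D Ω b1 b2 b3 u / norm3D Ω u }

lemma lambdaWedge_eq_specInf3D (α b1 b2 b3 : ℝ) :
    lambdaWedge α b1 b2 b3 = specInf3D (wedge α) b1 b2 b3 := rfl

lemma specInf3D_mul_norm3D_le (hu : ContDiff ℝ (⊤ : ℕ∞) u) (hsupp : HasCompactSupport u) :
    specInf3D Ω b1 b2 b3 * norm3D Ω u ≤ energy3D Ω b1 b2 b3 u := by
  rcases (norm3D_nonneg Ω u).eq_or_lt with hzero | hpos
  · rw [← hzero, mul_zero]
    exact energy3D_nonneg Ω b1 b2 b3 u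
  · rw [← le_div_iff₀ hpos]
    refine csInf_le ⟨0, ?_⟩ ⟨u, hu, hsupp, hpos, rfl⟩
    rintro _ ⟨v, -, -, -, rfl⟩
    exact div_nonneg (energy3D_nonneg Ω b1 b2 b3 v) (norm3D_nonneg Ω v)

lemma exists_contDiff_norm3D_pos (hΩ : (interior Ω).Nonempty) :
    ∃ u : ℝ × ℝ × ℝ → ℂ, ContDiff ℝ (⊤ : ℕ∞) u ∧ HasCompactSupport u ∧ 0 < norm3D Ω u := by
  obtain ⟨x, hx⟩ := hΩ
  obtain ⟨f, f_sub, f_supp, f_smooth, -, fx⟩ :=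
    exists_contDiff_tsupport_subset (n := ⊤) (isOpen_interior.mem_nhds hx)
  have sq_supp : HasCompactSupport fun y => ‖(f y : ℂ)‖ ^ 2 :=
    f_supp.comp_left (g := fun r : ℝ => ‖(r : ℂ)‖ ^ 2) (by simp)
  have eq_zero_off (y) (hy : y ∉ Ω) : ‖(f y : ℂ)‖ ^ 2 = 0 := by
    simp [image_eq_zero_of_notMem_tsupport fun h => hy (interior_subset (f_sub h))]
  refine ⟨fun y => f y, Complex.ofRealCLM.contDiff.comp f_smooth,
    f_supp.comp_left (g := fun r : ℝ => (r : ℂ)) Complex.ofReal_zero, ?_⟩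
  rw [norm3D, setIntegral_eq_integral_of_forall_compl_eq_zero eq_zero_off]
  have f_cont := f_smooth.continuous
  exact Continuous.integral_pos_of_hasCompactSupport_nonneg_nonzero (x := x) (by fun_prop) sq_supp
    (fun _ => sq_nonneg _) (by simp [fx])

lemma le_specInf3D {r : ℝ} (hΩ : (interior Ω).Nonempty)
    (h : ∀ u : ℝ × ℝ × ℝ → ℂ, ContDiff ℝ (⊤ : ℕ∞) u → HasCompactSupport u →
      r * norm3D Ω u ≤ energy3D Ω b1 b2 b3 u) :
    r ≤ specInf3D Ω b1 b2 b3 := by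
  obtain ⟨u, hu, hsupp, hpos⟩ := exists_contDiff_norm3D_pos hΩ
  refine le_csInf ⟨_, u, hu, hsupp, hpos, rfl⟩ ?_
  rintro _ ⟨v, hv, hsupp, hpos, rfl⟩
  exact (le_div_iff₀ hpos).2 (h v hv hsupp)

end Spectrum

section Rotation

/-- The rotation of angle `-θ` about the third axis: `rotation θ x` lists the coordinates of `x` in
the frame obtained from the standard one by turning it by `θ`. -/
def rotation (θ : ℝ) : (ℝ × ℝ × ℝ) ≃L[ℝ] ℝ × ℝ × ℝ :=
  LinearEquiv.toContinuousLinearEquiv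
    { toFun x := (x.1 * cos θ + x.2.1 * sin θ, x.2.1 * cos θ - x.1 * sin θ, x.2.2)
      invFun y := (y.1 * cos θ - y.2.1 * sin θ, y.1 * sin θ + y.2.1 * cos θ, y.2.2)
      map_add' x y := by ext <;> simp <;> ring
      map_smul' a x := by ext <;> simp <;> ring
      left_inv x := by
        ext <;> dsimp only
        · linear_combination x.1 * cos_sq_add_sin_sq θ
        · linear_combination x.2.1 * cos_sq_add_sin_sq θ
      right_inv y := by
        ext <;> dsimp only
        · linear_combination y.1 * cos_sq_add_sin_sq θ
        · linear_combination y.2.1 * cos_sq_add_sin_sq θ }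

lemma rotation_apply (θ : ℝ) (x : ℝ × ℝ × ℝ) :
    rotation θ x = (x.1 * cos θ + x.2.1 * sin θ, x.2.1 * cos θ - x.1 * sin θ, x.2.2) := rfl

lemma norm_sq_add_norm_sq_rotate (θ : ℝ) (p q : ℂ) :
    ‖cos θ • p - sin θ • q‖ ^ 2 + ‖sin θ • p + cos θ • q‖ ^ 2 = ‖p‖ ^ 2 + ‖q‖ ^ 2 := by
  simp only [Complex.sq_norm, Complex.normSq_apply, Complex.add_re, Complex.add_im,
    Complex.sub_re, Complex.sub_im, Complex.smul_re, Complex.smul_im, smul_eq_mul]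
  linear_combination (p.re ^ 2 + p.im ^ 2 + q.re ^ 2 + q.im ^ 2) * cos_sq_add_sin_sq θ

lemma energyDensity_comp_rotation (θ b1 b2 : ℝ) (u : ℝ × ℝ × ℝ → ℂ) (x : ℝ × ℝ × ℝ) :
    energyDensity b1 b2 0 (u ∘ rotation θ) x =
      energyDensity (b1 * cos θ + b2 * sin θ) (b2 * cos θ - b1 * sin θ) 0 u (rotation θ x) := by
  have rot_e1 : rotation θ (1, 0, 0) =
      cos θ • ((1, 0, 0) : ℝ × ℝ × ℝ) - sin θ • ((0, 1, 0) : ℝ × ℝ × ℝ) := by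
    simp [rotation_apply]
  have rot_e2 : rotation θ (0, 1, 0) =
      sin θ • ((1, 0, 0) : ℝ × ℝ × ℝ) + cos θ • ((0, 1, 0) : ℝ × ℝ × ℝ) := by
    simp [rotation_apply]
  have rot_e3 : rotation θ (0, 0, 1) = (0, 0, 1) := by simp [rotation_apply]
  have potential_eq : x.1 * b2 - x.2.1 * b1 =
      (rotation θ x).1 * (b2 * cos θ - b1 * sin θ)
        - (rotation θ x).2.1 * (b1 * cos θ + b2 * sin θ) := by
    rw [rotation_apply]
    linear_combination (x.2.1 * b1 - x.1 * b2) * cos_sq_add_sin_sq θ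
  simp only [energyDensity, (rotation θ).comp_right_fderiv, ContinuousLinearMap.comp_apply,
    ContinuousLinearEquiv.coe_coe, rot_e1, rot_e2, rot_e3, map_add, map_sub, map_smul, mul_zero,
    Complex.ofReal_zero, zero_mul, add_zero, norm_mul, norm_neg, Complex.norm_I, one_mul,
    norm_sq_add_norm_sq_rotate, Function.comp_apply, sub_add_eq_add_sub, add_sub_assoc, ← sub_mul,
    ← Complex.ofReal_sub, potential_eq]

lemma energy3D_preimage_comp_rotation (θ b1 b2 : ℝ) (Ω : Set (ℝ × ℝ × ℝ)) (u : ℝ × ℝ × ℝ → ℂ) :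
    energy3D (rotation θ ⁻¹' Ω) b1 b2 0 (u ∘ rotation θ) =
      |(rotation θ : (ℝ × ℝ × ℝ) →L[ℝ] ℝ × ℝ × ℝ).det|⁻¹ *
        energy3D Ω (b1 * cos θ + b2 * sin θ) (b2 * cos θ - b1 * sin θ) 0 u := by
  simp only [energy3D_eq_setIntegral_energyDensity, energyDensity_comp_rotation,
    setIntegral_preimage_comp_continuousLinearEquiv volume (rotation θ) Ω, smul_eq_mul]

lemma specInf3D_preimage_rotation (θ b1 b2 : ℝ) (Ω : Set (ℝ × ℝ × ℝ)) :
    specInf3D (rotation θ ⁻¹' Ω) b1 b2 0 =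
      specInf3D Ω (b1 * cos θ + b2 * sin θ) (b2 * cos θ - b1 * sin θ) 0 := by
  have jacobian_pos := abs_det_inv_pos (rotation θ)
  have hasCompactSupport_comp (u : ℝ × ℝ × ℝ → ℂ) :
      HasCompactSupport (u ∘ rotation θ) ↔ HasCompactSupport u :=
    ⟨fun h => by
      simpa [Function.comp_assoc] using h.comp_homeomorph (rotation θ).symm.toHomeomorph,
      fun h => h.comp_homeomorph (rotation θ).toHomeomorph⟩
  have comp_surjective : Function.Surjective fun u : ℝ × ℝ × ℝ → ℂ => u ∘ rotation θ :=
    (rotation θ).injective.surjective_comp_right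
  unfold specInf3D
  congr 1
  ext r
  rw [mem_ofPred_eq, mem_ofPred_eq, comp_surjective.exists]
  simp only [(rotation θ).contDiff_comp_iff, hasCompactSupport_comp, norm3D_preimage_comp,
    energy3D_preimage_comp_rotation, mul_pos_iff_of_pos_left jacobian_pos,
    mul_div_mul_left _ _ jacobian_pos.ne']

end Rotation

section Stretch

variable {Ω : Set (ℝ × ℝ × ℝ)} {b : ℝ} {u : ℝ × ℝ × ℝ → ℂ} {c : ℝˣ}

/-- The stretch `(x₁, x₂, x₃) ↦ (c x₁, x₂, x₃)`. -/
def stretch (c : ℝˣ) : (ℝ × ℝ × ℝ) ≃L[ℝ] ℝ × ℝ × ℝ :=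
  (ContinuousLinearEquiv.smulLeft c).prodCongr (.refl ℝ (ℝ × ℝ))

lemma stretch_apply (c : ℝˣ) (x : ℝ × ℝ × ℝ) : stretch c x = (c * x.1, x.2) := rfl

lemma energyDensity_comp_stretch_le (hc : |(c : ℝ)| ≤ 1) (x : ℝ × ℝ × ℝ) :
    energyDensity b 0 0 (u ∘ stretch c) x ≤ energyDensity b 0 0 u (stretch c x) := by
  have stretch_e1 : stretch c (1, 0, 0) = (c : ℝ) • ((1, 0, 0) : ℝ × ℝ × ℝ) := by
    simp [stretch_apply]
  have stretch_e2 : stretch c (0, 1, 0) = (0, 1, 0) := by simp [stretch_apply]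
  have stretch_e3 : stretch c (0, 0, 1) = (0, 0, 1) := by simp [stretch_apply]
  have stretch_snd : (stretch c x).2 = x.2 := rfl
  simp only [energyDensity, (stretch c).comp_right_fderiv, ContinuousLinearMap.comp_apply,
    ContinuousLinearEquiv.coe_coe, stretch_e1, stretch_e2, stretch_e3, map_smul, mul_zero,
    Complex.ofReal_zero, zero_mul, add_zero, norm_mul, norm_neg, Complex.norm_I, one_mul,
    Function.comp_apply, stretch_snd, norm_smul, Real.norm_eq_abs]
  gcongr
  exact mul_le_of_le_one_left (norm_nonneg _) hc

lemma energy3D_preimage_comp_stretch_le (hc : |(c : ℝ)| ≤ 1) (hu : ContDiff ℝ 1 u)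
    (hsupp : HasCompactSupport u) :
    energy3D (stretch c ⁻¹' Ω) b 0 0 (u ∘ stretch c) ≤
      |(stretch c : (ℝ × ℝ × ℝ) →L[ℝ] ℝ × ℝ × ℝ).det|⁻¹ * energy3D Ω b 0 0 u :=
  calc energy3D (stretch c ⁻¹' Ω) b 0 0 (u ∘ stretch c)
    _ ≤ ∫ x in stretch c ⁻¹' Ω, energyDensity b 0 0 u (stretch c x) := by
      have integrable_comp : Integrable fun x => energyDensity b 0 0 u (stretch c x) :=
        ((continuous_energyDensity hu).comp (stretch c).continuous).integrable_of_hasCompactSupport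
          ((hsupp.mono' support_energyDensity_subset).comp_homeomorph (stretch c).toHomeomorph)
      exact integral_mono_of_nonneg (.of_forall (energyDensity_nonneg b 0 0 _))
        integrable_comp.integrableOn (.of_forall (energyDensity_comp_stretch_le hc))
    _ = _ := setIntegral_preimage_comp_continuousLinearEquiv volume (stretch c) Ω _

lemma specInf3D_preimage_stretch_mul_norm3D_le (hc : |(c : ℝ)| ≤ 1)
    (hu : ContDiff ℝ (⊤ : ℕ∞) u) (hsupp : HasCompactSupport u) :
    specInf3D (stretch c ⁻¹' Ω) b 0 0 * norm3D Ω u ≤ energy3D Ω b 0 0 u := by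
  refine le_of_mul_le_mul_left ?_ (abs_det_inv_pos (stretch c))
  rw [mul_left_comm, ← norm3D_preimage_comp]
  calc specInf3D (stretch c ⁻¹' Ω) b 0 0 * norm3D (stretch c ⁻¹' Ω) (u ∘ stretch c)
    _ ≤ energy3D (stretch c ⁻¹' Ω) b 0 0 (u ∘ stretch c) :=
      specInf3D_mul_norm3D_le (hu.comp (stretch c).contDiff)
        (hsupp.comp_homeomorph (stretch c).toHomeomorph)
    _ ≤ _ := energy3D_preimage_comp_stretch_le hc (hu.of_le (by simp)) hsupp

end Stretch

section FaceWedge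

variable {α κ κ' : ℝ}

/-- The wedge with edge `x₁ = x₂ = 0` below its face `{x₂ = 0, 0 ≤ x₁}`, parametrized by the
cotangent `κ` of its opening angle. -/
def faceWedge (κ : ℝ) : Set (ℝ × ℝ × ℝ) :=
  {x | x.2.1 ≤ 0} ∩ {x | 0 ≤ x.1 + κ * x.2.1}

lemma measurableSet_faceWedge (κ : ℝ) : MeasurableSet (faceWedge κ) :=
  (measurableSet_le (by fun_prop) (by fun_prop)).inter
    (measurableSet_le (by fun_prop) (by fun_prop))

lemma interior_faceWedge_nonempty (κ : ℝ) : (interior (faceWedge κ)).Nonempty := by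
  have isOpen_strict : IsOpen ({x : ℝ × ℝ × ℝ | x.2.1 < 0} ∩ {x | 0 < x.1 + κ * x.2.1}) :=
    (isOpen_lt (by fun_prop) (by fun_prop)).inter (isOpen_lt (by fun_prop) (by fun_prop))
  have strict_subset :
      {x : ℝ × ℝ × ℝ | x.2.1 < 0} ∩ {x | 0 < x.1 + κ * x.2.1} ⊆ faceWedge κ :=
    inter_subset_inter (ofPred_subset_ofPred.2 fun _ => le_of_lt)
      (ofPred_subset_ofPred.2 fun _ => le_of_lt)
  exact ⟨(κ + 1, -1, 0), interior_maximal strict_subset isOpen_strict (by simp)⟩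

lemma preimage_stretch_faceWedge (κ : ℝ) {c : ℝˣ} (hc : 0 < (c : ℝ)) :
    stretch c ⁻¹' faceWedge (c * κ) = faceWedge κ := by
  ext x
  have factor : c * x.1 + c * κ * x.2.1 = c * (x.1 + κ * x.2.1) := by ring
  simp only [faceWedge, mem_preimage, mem_inter_iff, mem_ofPred_eq, stretch_apply, factor,
    mul_nonneg_iff_of_pos_left hc]

lemma preimage_rotation_faceWedge (h0 : 0 < α) (hπ : α < π) :
    rotation (α / 2) ⁻¹' faceWedge (cot α) = wedge α := by
  have cos_pos : 0 < cos (α / 2) := cos_pos_of_mem_Ioo ⟨by linarith, by linarith⟩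
  have sin_pos : 0 < sin α := sin_pos_of_pos_of_lt_pi h0 hπ
  have sin_half : sin α * cos (α / 2) - cos α * sin (α / 2) = sin (α / 2) := by
    rw [← sin_sub, sub_half]
  have cos_half : cos α * cos (α / 2) + sin α * sin (α / 2) = cos (α / 2) := by
    rw [← cos_sub, sub_half]
  ext x
  have upper_face : x.2.1 ≤ x.1 * tan (α / 2) ↔ x.2.1 * cos (α / 2) - x.1 * sin (α / 2) ≤ 0 := by
    rw [tan_eq_sin_div_cos, ← mul_div_assoc, le_div_iff₀ cos_pos, sub_nonpos]
  have lower_face_eq : cos (α / 2) * (x.2.1 + x.1 * tan (α / 2)) =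
      sin α * (x.1 * cos (α / 2) + x.2.1 * sin (α / 2)
        + cot α * (x.2.1 * cos (α / 2) - x.1 * sin (α / 2))) := by
    rw [tan_eq_sin_div_cos, cot_eq_cos_div_sin]
    field_simp
    linear_combination -x.1 * sin_half - x.2.1 * cos_half
  have lower_face : -(x.1 * tan (α / 2)) ≤ x.2.1 ↔ 0 ≤ x.1 * cos (α / 2) + x.2.1 * sin (α / 2)
      + cot α * (x.2.1 * cos (α / 2) - x.1 * sin (α / 2)) := by
    rw [neg_le_iff_add_nonneg, ← mul_nonneg_iff_of_pos_left cos_pos, lower_face_eq,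
      mul_nonneg_iff_of_pos_left sin_pos]
  simp only [wedge, faceWedge, mem_preimage, mem_inter_iff, mem_ofPred_eq, rotation_apply, abs_le,
    upper_face, lower_face, and_comm]

lemma lambdaWedge_eq_specInf3D_faceWedge (h0 : 0 < α) (hπ : α < π) (b : ℝ) :
    lambdaWedge α (b * cos (α / 2)) (b * sin (α / 2)) 0 = specInf3D (faceWedge (cot α)) b 0 0 := by
  rw [lambdaWedge_eq_specInf3D, ← preimage_rotation_faceWedge h0 hπ, specInf3D_preimage_rotation]
  congr 1
  · linear_combination b * cos_sq_add_sin_sq (α / 2)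
  · ring

lemma ae_add_mul_ne_zero (κ : ℝ) : ∀ᵐ x : ℝ × ℝ × ℝ, x.1 + κ * x.2.1 ≠ 0 := by
  let ℓ : (ℝ × ℝ × ℝ) →ₗ[ℝ] ℝ :=
    LinearMap.fst ℝ ℝ (ℝ × ℝ) + κ • (LinearMap.fst ℝ ℝ ℝ ∘ₗ LinearMap.snd ℝ ℝ (ℝ × ℝ))
  have ker_ne_top : LinearMap.ker ℓ ≠ ⊤ := fun h => by
    have : ℓ (1, 0, 0) = 0 := LinearMap.mem_ker.1 (h ▸ Submodule.mem_top)
    simp [ℓ] at this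
  exact measure_eq_zero_iff_ae_notMem.1 (Measure.addHaar_submodule volume _ ker_ne_top)

lemma continuous_setIntegral_faceWedge {F : Type*} [NormedAddCommGroup F] [NormedSpace ℝ F]
    {f : ℝ × ℝ × ℝ → F} (hf : Integrable f) : Continuous fun κ => ∫ x in faceWedge κ, f x := by
  simp only [← integral_indicator (measurableSet_faceWedge _)]
  refine continuous_iff_continuousAt.2 fun κ₀ => continuousAt_of_dominated (bound := fun x => ‖f x‖)
    (.of_forall fun κ => (hf.indicator (measurableSet_faceWedge κ)).aestronglyMeasurable)
    (.of_forall fun κ => .of_forall fun x => norm_indicator_le_norm_self f x) hf.norm ?_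
  filter_upwards [ae_add_mul_ne_zero κ₀] with x hx
  have cont : ContinuousAt (fun κ => x.1 + κ * x.2.1) κ₀ := by fun_prop
  have mem_iff : ∀ᶠ κ in nhds κ₀, x ∈ faceWedge κ ↔ x ∈ faceWedge κ₀ := by
    rcases hx.lt_or_gt with hneg | hpos
    · filter_upwards [cont.eventually_lt_const hneg] with κ hκ
      simp [faceWedge, hκ.not_ge, hneg.not_ge]
    · filter_upwards [cont.eventually_const_lt hpos] with κ hκ
      simp [faceWedge, hκ.le, hpos.le]
  refine continuousAt_const.congr (f := fun _ => (faceWedge κ₀).indicator f x) ?_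
  filter_upwards [mem_iff] with κ hκ
  by_cases hx₀ : x ∈ faceWedge κ₀ <;> simp [indicator, hκ, hx₀]

lemma specInf3D_faceWedge_mul_norm3D_le {b : ℝ} {u : ℝ × ℝ × ℝ → ℂ} (h0 : 0 < κ') (hκ : κ' ≤ κ)
    (hu : ContDiff ℝ (⊤ : ℕ∞) u) (hsupp : HasCompactSupport u) :
    specInf3D (faceWedge κ) b 0 0 * norm3D (faceWedge κ') u ≤ energy3D (faceWedge κ') b 0 0 u := by
  have hκ_pos : 0 < κ := h0.trans_le hκ
  have ratio_pos : 0 < κ' / κ := div_pos h0 hκ_pos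
  let c : ℝˣ := Units.mk0 (κ' / κ) ratio_pos.ne'
  have hc : |(c : ℝ)| ≤ 1 := (abs_of_pos ratio_pos).trans_le ((div_le_one hκ_pos).2 hκ)
  have c_mul : c * κ = κ' := div_mul_cancel₀ κ' hκ_pos.ne'
  rw [← preimage_stretch_faceWedge κ (c := c) ratio_pos, c_mul]
  exact specInf3D_preimage_stretch_mul_norm3D_le hc hu hsupp

lemma antitoneOn_specInf3D_faceWedge (b : ℝ) :
    AntitoneOn (fun κ => specInf3D (faceWedge κ) b 0 0) (Ici 0) := by
  intro κ' hκ' κ _ hle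
  refine le_specInf3D (interior_faceWedge_nonempty κ') fun u hu hsupp => ?_
  rcases hle.eq_or_lt with rfl | hlt
  · exact specInf3D_mul_norm3D_le hu hsupp
  have norm_cont : Continuous fun s => norm3D (faceWedge s) u :=
    continuous_setIntegral_faceWedge
      ((hu.continuous.memLp_of_hasCompactSupport hsupp).integrable_norm_pow two_ne_zero)
  have energy_cont : Continuous fun s => energy3D (faceWedge s) b 0 0 u :=
    continuous_setIntegral_faceWedge (integrable_energyDensity (hu.of_le (by simp)) hsupp)
  have mem_closure : κ' ∈ closure (Ioc 0 κ) := by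
    rw [closure_Ioc (hκ'.trans_lt hlt).ne]
    exact ⟨hκ', hle⟩
  exact le_on_closure (fun s hs => specInf3D_faceWedge_mul_norm3D_le hs.1 hs.2 hu hsupp)
    (norm_cont.const_mul _).continuousOn energy_cont.continuousOn mem_closure

end FaceWedge

lemma antitoneOn_cot : AntitoneOn cot (Ioo 0 π) := by
  intro α hα β hβ hle
  rw [cot_eq_cos_div_sin, cot_eq_cos_div_sin, div_le_div_iff₀ (sin_pos_of_mem_Ioo hβ)
    (sin_pos_of_mem_Ioo hα)]
  have sin_diff_nonneg := sin_nonneg_of_nonneg_of_le_pi (sub_nonneg.2 hle)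
    (by linarith [hα.1, hβ.2])
  rw [sin_sub] at sin_diff_nonneg
  linarith

lemma cot_nonneg_of_mem_Ioc {α : ℝ} (hα : α ∈ Ioc 0 (π / 2)) : 0 ≤ cot α := by
  rw [cot_eq_cos_div_sin]
  exact div_nonneg (cos_nonneg_of_mem_Icc ⟨by linarith [hα.1, pi_pos], hα.2⟩)
    (sin_nonneg_of_nonneg_of_le_pi hα.1.le (by linarith [hα.2, pi_pos]))

end MagWedge

open MagWedge in
theorem lambdaWedge_monotone_normal_field_general (b : ℝ) :
    MonotoneOn (fun α : ℝ => lambdaWedge α (b * cos (α / 2)) (b * sin (α / 2)) 0)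
      (Ioc 0 (π / 2)) := by
  have mem_Ioo {α : ℝ} (hα : α ∈ Ioc 0 (π / 2)) : α ∈ Ioo 0 π :=
    ⟨hα.1, hα.2.trans_lt (half_lt_self pi_pos)⟩
  have comp_cot : MonotoneOn (fun α => specInf3D (faceWedge (cot α)) b 0 0) (Ioc 0 (π / 2)) :=
    (antitoneOn_specInf3D_faceWedge b).comp (antitoneOn_cot.mono fun _ => mem_Ioo)
      fun _ => cot_nonneg_of_mem_Ioc
  exact comp_cot.congr fun α hα =>
    (lambdaWedge_eq_specInf3D_faceWedge (mem_Ioo hα).1 (mem_Ioo hα).2 b).symm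

open MagWedge in
/-- for the field tangent to a face and normal to the edge,
`α ↦ λ(B(α);W_α)` is non-decreasing on `(0, π/2]`. -/
theorem lambdaWedge_monotone_normal_field :
    MonotoneOn (fun α : ℝ => lambdaWedge α (Real.cos (α / 2)) (Real.sin (α / 2)) 0)
      (Set.Ioc 0 (π / 2)) := by
  simpa only [one_mul] using lambdaWedge_monotone_normal_field_general 1
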